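/- Let p be a prime and let A be an Artinian module over the ring ℤ_p of p-adic integers. Then the additive group of A is a Chernikov group and its divisible part is a p-group. -/

import Mathlib

/-- The quasi-cyclic (Prüfer) `q`-group `C_{q^∞}`: the `q`-primary component of `ℚ/ℤ`. -/
def PruferGroup (q : ℕ) (hq : q.Prime) :
    AddSubgroup (ℚ ⧸ AddSubgroup.zmultiples (1 : ℚ)) :=
  haveI : Fact q.Prime := ⟨hq⟩
  AddCommGroup.primaryComponent (ℚ ⧸ AddSubgroup.zmultiples (1 : ℚ)) q

/-- An additive subgroup `D` of an abelian group is divisible if every element of `D` is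
divisible within `D` by every positive natural number. -/
def AddSubgroup.IsDivisible {A : Type*} [AddCommGroup A] (D : AddSubgroup A) : Prop :=
  ∀ a ∈ D, ∀ n : ℕ, 0 < n → ∃ b ∈ D, n • b = a

/-- A Chernikov (abelian) group: it possesses a divisible subgroup of finite index which is
a direct sum of finitely many quasi-cyclic (Prüfer) groups. -/
def IsChernikov (A : Type*) [AddCommGroup A] : Prop :=
  ∃ D : AddSubgroup A, D.FiniteIndex ∧ D.IsDivisible ∧
    ∃ (n : ℕ) (q : Fin n → ℕ) (hq : ∀ i, (q i).Prime),
      Nonempty (D ≃+ ∀ i : Fin n, PruferGroup (q i) (hq i))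

/-- The divisible part of an abelian group: its maximal divisible subgroup, i.e. the
subgroup generated by all divisible subgroups. -/
def divisiblePart (A : Type*) [AddCommGroup A] : AddSubgroup A :=
  sSup {D : AddSubgroup A | D.IsDivisible}

/-!
An Artinian `ℤ_p`-module `A` is a `p`-group: on a cyclic submodule `ℤ_p x` the descending chain
condition gives `p ^ (n + 1) c x = p ^ n x`, and `1 - p c` is a unit. Its socle `A[p]` is an
Artinian module over the finite ring `ℤ_p / p`, hence finite. The rest is about abelian groups: in
a `p`-group `A` with finite socle the subgroups `A[p] ∩ p ^ k A` stabilize, which forces `p ^ k A`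
itself to stabilize at a `p`-divisible subgroup `D`. Since `A = A[p ^ k] + D`, the index of `D` is
finite. Finally, divisible groups being injective, a divisible `p`-group is determined by its
socle, so `D` is a direct sum of copies of `C_{p^∞}`, as many as the dimension of `D[p]` over
`ℤ / p`.
-/

section Torsion

open scoped AddSubgroup

theorem finite_torsionBy_of_injective {G H : Type*} [AddCommGroup G] [AddCommGroup H]
    (f : H →+ G) (hf : Function.Injective f) (n : ℕ) [Finite G[n]] : Finite H[n] := by
  have hmap : H[n].map f ≤ G[n] := by
    rintro _ ⟨x, hx, rfl⟩
    rw [AddSubgroup.torsionBy.nsmul_iff, ← map_nsmul, AddSubgroup.torsionBy.nsmul_iff.1 hx,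
      map_zero]
  have := Finite.of_injective _ (AddSubgroup.inclusion_injective hmap)
  exact .of_equiv _ (H[n].equivMapOfInjective f hf).symm.toEquiv

theorem finite_torsionBy_mul {G : Type*} [AddCommGroup G] (m n : ℕ) [Finite G[m]]
    [Finite G[n]] : Finite G[(m * n : ℕ)] := by
  let f : G[(m * n : ℕ)] →+ G := (nsmulAddMonoidHom m).comp G[(m * n : ℕ)].subtype
  have hker : f.ker.map G[(m * n : ℕ)].subtype ≤ G[m] := by
    rintro _ ⟨x, hx, rfl⟩
    exact AddSubgroup.torsionBy.nsmul_iff.2 hx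
  have hrange : f.range ≤ G[n] := by
    rintro _ ⟨x, rfl⟩
    refine AddSubgroup.torsionBy.nsmul_iff.2 ?_
    exact (mul_nsmul (x : G) m n).symm.trans (AddSubgroup.torsionBy.nsmul_iff.1 x.2)
  refine f.finite_iff_finite_ker_range.2 ⟨?_, ?_⟩
  · have := Finite.of_injective _ (AddSubgroup.inclusion_injective hker)
    exact .of_equiv _ (f.ker.equivMapOfInjective _ G[(m * n : ℕ)].subtype_injective).symm.toEquiv
  · exact .of_injective _ (AddSubgroup.inclusion_injective hrange)

theorem finite_torsionBy_pow {G : Type*} [AddCommGroup G] (n : ℕ) [Finite G[n]] (k : ℕ) :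
    Finite G[(n ^ k : ℕ)] := by
  induction k with
  | zero =>
    rw [pow_zero, Nat.cast_one, AddSubgroup.torsionBy, Submodule.torsionBy_one]
    exact inferInstanceAs (Finite (⊥ : Submodule ℤ G))
  | succ k ih =>
    rw [pow_succ]
    exact finite_torsionBy_mul _ _

theorem card_torsionBy_pi {ι : Type*} [Fintype ι] (G : ι → Type*) [∀ i, AddCommGroup (G i)]
    (n : ℕ) : Nat.card (∀ i, G i)[n] = ∏ i, Nat.card (G i)[n] := by
  have hpi : ((∀ i, G i)[n] : Set (∀ i, G i)) = Set.univ.pi fun i ↦ ((G i)[n] : Set (G i)) := by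
    ext x
    simp [funext_iff]
  rw [← Nat.card_pi]
  exact Nat.card_congr ((Equiv.setCongr hpi).trans (Equiv.Set.univPi _))

theorem nonempty_torsionBy_addEquiv_of_card_eq {G H : Type*} [AddCommGroup G] [AddCommGroup H]
    (p : ℕ) [Fact p.Prime] [Finite G[p]] (h : Nat.card G[p] = Nat.card H[p]) :
    Nonempty (G[p] ≃+ H[p]) := by
  have : Finite H[p] := Nat.finite_of_card_ne_zero (h ▸ Nat.card_pos.ne')
  let := AddSubgroup.torsionBy.zmodModule (A := G) (n := p)
  let := AddSubgroup.torsionBy.zmodModule (A := H) (n := p)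
  have hrank : Module.finrank (ZMod p) G[p] = Module.finrank (ZMod p) H[p] := by
    rw [Module.natCard_eq_pow_finrank (K := ZMod p),
      Module.natCard_eq_pow_finrank (K := ZMod p) (V := H[p]), Nat.card_zmod] at h
    exact Nat.pow_right_injective (Fact.out : p.Prime).two_le h
  exact (FiniteDimensional.nonempty_linearEquiv_of_finrank_eq hrank).map LinearEquiv.toAddEquiv

theorem exists_card_torsionBy_eq_pow {G : Type*} [AddCommGroup G] (p : ℕ) [Fact p.Prime]
    [Finite G[p]] : ∃ r, Nat.card G[p] = p ^ r := by
  let := AddSubgroup.torsionBy.zmodModule (A := G) (n := p)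
  exact ⟨_, by rw [Module.natCard_eq_pow_finrank (K := ZMod p), Nat.card_zmod]⟩

end Torsion

section RangeNSMul

open scoped AddSubgroup

variable {G : Type*} [AddCommGroup G]

theorem antitone_range_nsmulAddMonoidHom_pow (n : ℕ) :
    Antitone fun k ↦ (nsmulAddMonoidHom (α := G) (n ^ k)).range := by
  rintro k l hkl _ ⟨x, rfl⟩
  obtain ⟨m, rfl⟩ := Nat.exists_eq_add_of_le hkl
  exact ⟨n ^ m • x, by simp [pow_add, mul_nsmul']⟩

theorem exists_inf_range_nsmul_pow_eq (K : AddSubgroup G) [Finite K] (n : ℕ) :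
    ∃ k, ∀ l ≥ k, K ⊓ (nsmulAddMonoidHom (n ^ k)).range =
      K ⊓ (nsmulAddMonoidHom (n ^ l)).range := by
  let f : ℕ →o (AddSubgroup K)ᵒᵈ :=
    ⟨fun k ↦ (nsmulAddMonoidHom (n ^ k)).range.addSubgroupOf K, fun _ _ hkl ↦
      AddSubgroup.addSubgroupOf_mono _ (antitone_range_nsmulAddMonoidHom_pow n hkl)⟩
  obtain ⟨k, hk⟩ := WellFoundedGT.monotone_chain_condition f
  refine ⟨k, fun l hl ↦ ?_⟩
  rw [inf_comm, inf_comm K, ← AddSubgroup.addSubgroupOf_inj]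
  exact hk l hl

theorem finiteIndex_range_nsmulAddMonoidHom (m : ℕ) [Finite G[m]]
    (h : (nsmulAddMonoidHom (α := G) (m * m)).range = (nsmulAddMonoidHom m).range) :
    (nsmulAddMonoidHom (α := G) m).range.FiniteIndex := by
  have hsurj : Function.Surjective
      ((QuotientAddGroup.mk' (nsmulAddMonoidHom (α := G) m).range).comp G[m].subtype) := by
    intro q
    obtain ⟨a, rfl⟩ := QuotientAddGroup.mk_surjective q
    obtain ⟨b, hb : (m * m) • b = m • a⟩ := h.ge ⟨a, rfl⟩
    have hab : m • (a - m • b) = 0 := by rw [smul_sub, ← mul_nsmul, hb, sub_self]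
    refine ⟨⟨a - m • b, AddSubgroup.torsionBy.nsmul_iff.2 hab⟩, QuotientAddGroup.eq.2 ⟨b, ?_⟩⟩
    simp
  have := Finite.of_surjective _ hsurj
  exact AddSubgroup.finiteIndex_of_finite_quotient

end RangeNSMul

/-- An additively written `p`-group, the additive counterpart of `IsPGroup`. -/
def IsAddPGroup (p : ℕ) (G : Type*) [AddMonoid G] : Prop :=
  ∀ x : G, ∃ k : ℕ, p ^ k • x = 0

namespace IsAddPGroup

open scoped AddSubgroup

theorem addSubgroup {p : ℕ} {G : Type*} [AddGroup G] (hG : IsAddPGroup p G)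
    (K : AddSubgroup G) : IsAddPGroup p K :=
  fun x ↦ (hG x).imp fun _ hk ↦ Subtype.ext hk

theorem pi {p : ℕ} {ι : Type*} [Finite ι] {G : ι → Type*} [∀ i, AddMonoid (G i)]
    (hG : ∀ i, IsAddPGroup p (G i)) : IsAddPGroup p (∀ i, G i) := by
  intro x
  choose k hk using fun i ↦ hG i (x i)
  obtain ⟨K, hK⟩ := Finite.exists_le k
  refine ⟨K, funext fun i ↦ addOrderOf_dvd_iff_nsmul_eq_zero.1 ?_⟩
  exact (addOrderOf_dvd_of_nsmul_eq_zero (hk i)).trans (pow_dvd_pow p (hK i))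

variable {p : ℕ} {G H : Type*} [AddCommGroup G] [AddCommGroup H]

theorem surjective_nsmul (hp : p.Prime) (hG : IsAddPGroup p G)
    (hpG : Function.Surjective (p • · : G → G)) {n : ℕ} (hn : n ≠ 0) :
    Function.Surjective (n • · : G → G) := by
  obtain ⟨a, m, hm, rfl⟩ := Nat.exists_eq_pow_mul_and_not_dvd hn p hp.ne_one
  have hpow : Function.Surjective (p ^ a • · : G → G) := smul_iterate (α := G) p a ▸ hpG.iterate a
  have hcoprime : Function.Surjective (m • · : G → G) := by
    intro x
    obtain ⟨k, hk⟩ := hG x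
    have hmx : m.Coprime (addOrderOf x) :=
      ((hp.coprime_iff_not_dvd.2 hm).symm.pow_right k).coprime_dvd_right
        (addOrderOf_dvd_of_nsmul_eq_zero hk)
    obtain ⟨l, hl⟩ := exists_nsmul_eq_self_of_coprime hmx
    exact ⟨l • x, (smul_comm m l x).trans hl⟩
  convert hpow.comp hcoprime using 2 with x
  exact mul_nsmul' x (p ^ a) m

theorem injective_of_disjoint_torsionBy_ker (hG : IsAddPGroup p G) {f : G →+ H}
    (hf : Disjoint G[p] f.ker) : Function.Injective f := by
  have hker (k : ℕ) : ∀ x ∈ f.ker, p ^ k • x = 0 → x = 0 := by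
    induction k with
    | zero => simp
    | succ k ih =>
      intro x hx hkx
      rw [pow_succ, mul_nsmul'] at hkx
      have hpx : p • x = 0 := ih _ (f.ker.nsmul_mem hx p) hkx
      exact AddSubgroup.disjoint_def.1 hf (AddSubgroup.torsionBy.nsmul_iff.2 hpx) hx
  refine (injective_iff_map_eq_zero f).2 fun x hx ↦ ?_
  obtain ⟨k, hk⟩ := hG x
  exact hker k x hx hk

theorem surjective_of_torsionBy_le_range (hH : IsAddPGroup p H)
    (hpG : Function.Surjective (p • · : G → G)) {f : G →+ H} (hf : H[p] ≤ f.range) :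
    Function.Surjective f := by
  have hrange (k : ℕ) : ∀ x : H, p ^ k • x = 0 → x ∈ f.range := by
    induction k with
    | zero => simp +contextual
    | succ k ih =>
      intro x hx
      rw [pow_succ, mul_nsmul'] at hx
      obtain ⟨y, hy⟩ := ih _ hx
      obtain ⟨z, rfl⟩ := hpG y
      have hxz : x - f z ∈ f.range := by
        refine hf (AddSubgroup.torsionBy.nsmul_iff.2 ?_)
        rw [smul_sub, ← hy, map_nsmul, sub_self]
      simpa using add_mem hxz ⟨z, rfl⟩
  intro x
  obtain ⟨k, hk⟩ := hH x
  exact hrange k x hk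

theorem nonempty_addEquiv_of_torsionBy (hp : p.Prime) (hG : IsAddPGroup p G)
    (hH : IsAddPGroup p H) (hpG : Function.Surjective (p • · : G → G))
    (hpH : Function.Surjective (p • · : H → H)) (e : G[p] ≃+ H[p]) : Nonempty (G ≃+ H) := by
  let : DivisibleBy H ℕ := divisibleByOfSMulRightSurj H ℕ fun hn ↦ hH.surjective_nsmul hp hpH hn
  let : DivisibleBy H ℤ := AddGroup.divisibleByIntOfDivisibleByNat H
  obtain ⟨f, hf⟩ := (Module.Baer.of_divisible H).extension_property_addMonoidHom
    G[p].subtype Subtype.val_injective (H[p].subtype.comp e.toAddMonoidHom)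
  have hfe (x : G[p]) : f x = e x := DFunLike.congr_fun hf x
  have hdisj : Disjoint G[p] f.ker := by
    refine AddSubgroup.disjoint_def.2 fun {x} hx hfx ↦ ?_
    have : e ⟨x, hx⟩ = 0 := Subtype.ext ((hfe _).symm.trans hfx)
    simpa using this
  have hrange : H[p] ≤ f.range := fun y hy ↦
    ⟨e.symm ⟨y, hy⟩, by rw [hfe, e.apply_symm_apply]⟩
  exact ⟨.ofBijective f ⟨hG.injective_of_disjoint_torsionBy_ker hdisj,
    hH.surjective_of_torsionBy_le_range hpG hrange⟩⟩

theorem exists_range_nsmul_pow_eq (hG : IsAddPGroup p G) [Finite G[p]] :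
    ∃ k, ∀ l ≥ k,
      (nsmulAddMonoidHom (α := G) (p ^ l)).range = (nsmulAddMonoidHom (p ^ k)).range := by
  obtain ⟨k, hk⟩ := exists_inf_range_nsmul_pow_eq G[p] p
  refine ⟨k, fun l hl ↦ (antitone_range_nsmulAddMonoidHom_pow p hl).antisymm ?_⟩
  -- `p ^ j • x` lies in the socle and is divisible by `p ^ k`, hence by `p ^ (l + j)`, so some
  -- multiple of `p ^ l` differs from `x` by an element of smaller exponent.
  have hle (j : ℕ) : ∀ x ∈ (nsmulAddMonoidHom (α := G) (p ^ k)).range, p ^ j • x = 0 →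
      x ∈ (nsmulAddMonoidHom (α := G) (p ^ l)).range := by
    induction j with
    | zero =>
      intro x _ hx
      simp_all
    | succ j ih =>
      intro x hx hjx
      have hsocle : p ^ j • x ∈ G[p] ⊓ (nsmulAddMonoidHom (p ^ k)).range :=
        ⟨AddSubgroup.torsionBy.nsmul_iff.2 (by rw [← mul_nsmul, ← pow_succ, hjx]),
          nsmul_mem hx _⟩
      rw [hk (l + j) (by lia)] at hsocle
      obtain ⟨y, hy : p ^ (l + j) • y = p ^ j • x⟩ := hsocle.2
      have hly : p ^ l • y ∈ (nsmulAddMonoidHom (α := G) (p ^ l)).range := ⟨y, rfl⟩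
      have hxy : x - p ^ l • y ∈ (nsmulAddMonoidHom (p ^ l)).range :=
        ih _ (sub_mem hx (antitone_range_nsmulAddMonoidHom_pow p hl hly))
          (by rw [smul_sub, ← mul_nsmul, ← pow_add, hy, sub_self])
      simpa using add_mem hxy hly
  intro x hx
  obtain ⟨j, hj⟩ := hG x
  exact hle j x hx hj

end IsAddPGroup

section AddCircle

open scoped AddSubgroup

variable {𝕜 : Type*} [Field 𝕜] [LinearOrder 𝕜] [IsStrictOrderedRing 𝕜] (q : 𝕜) [Fact (0 < q)]
  {n : ℕ}

theorem torsionBy_addCircle_eq_zmultiples (hn : 0 < n) :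
    (AddCircle q)[n] = AddSubgroup.zmultiples ((q / n : 𝕜) : AddCircle q) := by
  ext u
  rw [AddSubgroup.torsionBy.nsmul_iff]
  constructor
  · rw [AddCircle.nsmul_eq_zero_iff hn]
    rintro ⟨m, -, rfl⟩
    exact ⟨m, by simp [AddCircle.natCast_div_mul_eq_nsmul]⟩
  · rintro ⟨m, rfl⟩
    have hqn : n • ((q / n : 𝕜) : AddCircle q) = 0 :=
      addOrderOf_dvd_iff_nsmul_eq_zero.1 (AddCircle.addOrderOf_period_div hn).dvd
    rw [smul_comm, hqn, smul_zero]

theorem card_torsionBy_addCircle (hn : 0 < n) : Nat.card (AddCircle q)[n] = n := by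
  rw [torsionBy_addCircle_eq_zmultiples q hn, Nat.card_zmultiples,
    AddCircle.addOrderOf_period_div hn]

end AddCircle

namespace PruferGroup

open scoped AddSubgroup

variable (p : ℕ) (hp : p.Prime)

theorem isAddPGroup : IsAddPGroup p (PruferGroup p hp) :=
  fun x ↦ x.2.imp fun _ hk ↦ Subtype.ext hk

theorem surjective_nsmul : Function.Surjective (p • · : PruferGroup p hp → PruferGroup p hp) := by
  rintro ⟨x, k, hk⟩
  have hx : p • (DivisibleBy.div x (p : ℤ)) = x := by
    rw [← natCast_zsmul, DivisibleBy.div_cancel x (mod_cast hp.ne_zero)]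
  refine ⟨⟨DivisibleBy.div x (p : ℤ), k + 1, ?_⟩, Subtype.ext hx⟩
  rw [pow_succ, mul_nsmul', hx, hk]

theorem map_torsionBy : (PruferGroup p hp)[p].map (PruferGroup p hp).subtype =
    (AddCircle (1 : ℚ))[p] := by
  ext u
  rw [AddSubgroup.torsionBy.nsmul_iff]
  constructor
  · rintro ⟨x, hx, rfl⟩
    exact congrArg Subtype.val (AddSubgroup.torsionBy.nsmul_iff.1 hx)
  · intro hu
    exact ⟨⟨u, 1, by rwa [pow_one]⟩, AddSubgroup.torsionBy.nsmul_iff.2 (Subtype.ext hu), rfl⟩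

theorem card_torsionBy : Nat.card (PruferGroup p hp)[p] = p := by
  rw [← AddSubgroup.card_map_of_injective (PruferGroup p hp).subtype_injective, map_torsionBy,
    card_torsionBy_addCircle 1 hp.pos]

end PruferGroup

section Chernikov

open scoped AddSubgroup

variable {p : ℕ} [hp : Fact p.Prime] {G : Type*} [AddCommGroup G]

theorem IsAddPGroup.exists_nonempty_addEquiv_pi_pruferGroup (hG : IsAddPGroup p G)
    (hpG : Function.Surjective (p • · : G → G)) [Finite G[p]] :
    ∃ r, Nonempty (G ≃+ (Fin r → PruferGroup p hp.out)) := by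
  obtain ⟨r, hr⟩ := exists_card_torsionBy_eq_pow (G := G) p
  have hcard : Nat.card G[p] = Nat.card (Fin r → PruferGroup p hp.out)[p] := by
    rw [card_torsionBy_pi, Finset.prod_const, PruferGroup.card_torsionBy, hr, Finset.card_univ,
      Fintype.card_fin]
  obtain ⟨e⟩ := nonempty_torsionBy_addEquiv_of_card_eq p hcard
  exact ⟨r, hG.nonempty_addEquiv_of_torsionBy hp.out
    (.pi fun _ ↦ PruferGroup.isAddPGroup p hp.out) hpG
    (.piMap fun _ ↦ PruferGroup.surjective_nsmul p hp.out) e⟩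

theorem IsAddPGroup.isChernikov (hG : IsAddPGroup p G) [Finite G[p]] : IsChernikov G := by
  obtain ⟨k, hk⟩ := hG.exists_range_nsmul_pow_eq
  set D := (nsmulAddMonoidHom (α := G) (p ^ k)).range
  have hDG : IsAddPGroup p D := hG.addSubgroup D
  have hpD : Function.Surjective (p • · : D → D) := by
    rintro ⟨x, hx⟩
    rw [← hk (k + 1) k.le_succ] at hx
    obtain ⟨y, rfl⟩ := hx
    exact ⟨⟨p ^ k • y, y, rfl⟩, Subtype.ext (by simp [pow_succ, mul_nsmul])⟩
  have := finite_torsionBy_of_injective D.subtype D.subtype_injective p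
  have := finite_torsionBy_pow (G := G) p k
  have hindex : D.FiniteIndex :=
    finiteIndex_range_nsmulAddMonoidHom _ (by rw [← pow_add, hk _ (k.le_add_left k)])
  have hdiv : D.IsDivisible := by
    intro x hx n hn
    obtain ⟨y, hy⟩ := hDG.surjective_nsmul hp.out hpD hn.ne' ⟨x, hx⟩
    exact ⟨y, y.2, congrArg Subtype.val hy⟩
  obtain ⟨r, hr⟩ := hDG.exists_nonempty_addEquiv_pi_pruferGroup hpD
  exact ⟨D, hindex, hdiv, r, fun _ ↦ p, fun _ ↦ hp.out, hr⟩

end Chernikov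

section Artinian

theorem finite_of_isArtinian (R M : Type*) [Ring R] [Finite R] [AddCommGroup M] [Module R M]
    [IsArtinian R M] : Finite M := by
  have : IsNoetherian R M := IsSemiprimaryRing.isNoetherian_iff_isArtinian.2 inferInstance
  exact Module.finite_of_finite R

theorem finite_torsionBy_of_isArtinian {R : Type*} (M : Type*) [CommRing R] [AddCommGroup M]
    [Module R M] [IsArtinian R M] (r : R) [Finite (R ⧸ Ideal.span {r})] :
    Finite (Submodule.torsionBy R M r) :=
  have : IsArtinian (R ⧸ Ideal.span {r}) (Submodule.torsionBy R M r) :=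
    isArtinian_of_tower R inferInstance
  finite_of_isArtinian (R ⧸ Ideal.span {r}) _

theorem exists_pow_smul_eq_zero_of_mem_jacobson_bot {R M : Type*} [CommRing R]
    [AddCommGroup M] [Module R M] [IsArtinian R M] {r : R}
    (hr : r ∈ (⊥ : Ideal R).jacobson) (x : M) : ∃ n : ℕ, r ^ n • x = 0 := by
  obtain ⟨n, ⟨y, hy⟩, hn⟩ := IsArtinian.exists_pow_succ_smul_dvd r
    (⟨x, Submodule.mem_span_singleton_self x⟩ : Submodule.span R {x})
  obtain ⟨c, rfl⟩ := Submodule.mem_span_singleton.1 hy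
  have hcx : r ^ (n + 1) • c • x = r ^ n • x := congrArg Subtype.val hn
  have hunit : IsUnit (r * -c + 1) := Ideal.mem_jacobson_bot.1 hr (-c)
  refine ⟨n, hunit.smul_eq_zero.1 ?_⟩
  calc (r * -c + 1) • r ^ n • x = r ^ n • x - r ^ (n + 1) • c • x := by module
    _ = 0 := by rw [hcx, sub_self]

end Artinian

open scoped AddSubgroup in
theorem artinian_padicInt_module_chernikov_general (p : ℕ) [Fact p.Prime] (R : Type*)
    [CommRing R] [Finite (R ⧸ Ideal.span {(p : R)})] (A : Type*) [AddCommGroup A] [Module R A]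
    [IsArtinian R A] (hpR : (p : R) ∈ (⊥ : Ideal R).jacobson) :
    IsChernikov A ∧ ∀ a : A, ∃ n : ℕ, p ^ n • a = 0 := by
  have hA : IsAddPGroup p A := fun a ↦
    (exists_pow_smul_eq_zero_of_mem_jacobson_bot hpR a).imp fun n hn ↦ by
      rwa [← Nat.cast_pow, Nat.cast_smul_eq_nsmul] at hn
  have hsocle : (A[p] : Set A) = Submodule.torsionBy R A (p : R) := by
    ext a
    simp [Nat.cast_smul_eq_nsmul]
  have : Finite A[p] := by
    have := finite_torsionBy_of_isArtinian A (p : R)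
    exact .of_equiv _ (Equiv.setCongr hsocle.symm)
  exact ⟨hA.isChernikov, hA⟩

section PadicInt

variable {p : ℕ} [Fact p.Prime]

theorem natCast_mem_jacobson_bot_padicInt : (p : ℤ_[p]) ∈ (⊥ : Ideal ℤ_[p]).jacobson := by
  rw [IsLocalRing.jacobson_eq_maximalIdeal _ bot_ne_top, PadicInt.maximalIdeal_eq_span_p]
  exact Ideal.mem_span_singleton_self _

instance finite_padicInt_quotient_span_natCast : Finite (ℤ_[p] ⧸ Ideal.span {(p : ℤ_[p])}) := by
  rw [← PadicInt.maximalIdeal_eq_span_p]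
  exact .of_equiv _ PadicInt.residueField.symm.toEquiv

end PadicInt

/-- Lemma 2.3: the additive group of an Artinian module over the ring `ℤ_p` of `p`-adic
integers is Chernikov, and its divisible part is a `p`-group. -/
theorem artinian_padicInt_module_chernikov (p : ℕ) [Fact p.Prime]
    (A : Type*) [AddCommGroup A] [Module ℤ_[p] A] [IsArtinian ℤ_[p] A] :
    IsChernikov A ∧ ∀ a ∈ divisiblePart A, ∃ n : ℕ, p ^ n • a = 0 :=
  (artinian_padicInt_module_chernikov_general p ℤ_[p] A
    natCast_mem_jacobson_bot_padicInt).imp_right fun hA a _ ↦ hA a
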